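/- For every ε > 0 there exists N such that for all n ≥ N the following holds: if A ⊆ {1,2,…,n} is a set such that no product of 6 pairwise distinct elements of A is a perfect square, then |A| ≤ π(n) + π(n/2) + n^{2/3}(log n)^{2^{1/3} − 1/3 + ε}. -/

import Mathlib

/-- No product of 6 pairwise distinct elements of `A` is a perfect square. -/
def NoSixSquareProduct (A : Finset ℕ) : Prop :=
  ¬ ∃ a₁ a₂ a₃ a₄ a₅ a₆ : ℕ, a₁ ∈ A ∧ a₂ ∈ A ∧ a₃ ∈ A ∧ a₄ ∈ A ∧ a₅ ∈ A ∧ a₆ ∈ A ∧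
    ([a₁, a₂, a₃, a₄, a₅, a₆] : List ℕ).Nodup ∧
    ∃ m : ℕ, 0 < m ∧ a₁ * a₂ * a₃ * a₄ * a₅ * a₆ = m ^ 2

def C6Free (E : Finset (ℕ × ℕ)) : Prop :=
  ∀ x1 x2 x3 y1 y2 y3 : ℕ, x1 ≠ x2 → x1 ≠ x3 → x2 ≠ x3 → y1 ≠ y2 → y1 ≠ y3 → y2 ≠ y3 →
   (x1,y1) ∈ E → (x2,y1) ∈ E → (x2,y2) ∈ E → (x3,y2) ∈ E → (x3,y3) ∈ E → (x1,y3) ∈ E → False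

def C4Free (E : Finset (ℕ × ℕ)) : Prop :=
  ∀ x1 x2 y1 y2 : ℕ, x1 ≠ x2 → y1 ≠ y2 →
   (x1,y1) ∈ E → (x2,y1) ∈ E → (x2,y2) ∈ E → (x1,y2) ∈ E → False

theorem C6Free.mono {E F : Finset (ℕ × ℕ)} (h : C6Free F) (hs : E ⊆ F) : C6Free E := by
  intro x1 x2 x3 y1 y2 y3 h1 h2 h3 h4 h5 h6 a b c d e f
  exact h x1 x2 x3 y1 y2 y3 h1 h2 h3 h4 h5 h6 (hs a) (hs b) (hs c) (hs d) (hs e) (hs f)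

theorem c6free_of_noSix {A : Finset ℕ} (hA : NoSixSquareProduct A) (h0 : 0 ∉ A)
    (E : Finset (ℕ × ℕ)) (hE : ∀ e ∈ E, e.1 * e.2 ∈ A)
    (hinj : ∀ e ∈ E, ∀ f ∈ E, e.1 * e.2 = f.1 * f.2 → e = f) : C6Free E := by
  intro x1 x2 x3 y1 y2 y3 h1 h2 h3 h4 h5 h6 a b c d e f
  apply hA
  have key : ∀ u v u' v' : ℕ, (u, v) ∈ E → (u', v') ∈ E → (u ≠ u' ∨ v ≠ v') → u * v ≠ u' * v' := by
    intro u v u' v' hu hv hne heq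
    have := hinj _ hu _ hv heq
    simp only [Prod.mk.injEq] at this
    omega
  refine ⟨_, _, _, _, _, _, hE _ a, hE _ b, hE _ c, hE _ d, hE _ e, hE _ f, ?_, x1 * x2 * x3 * y1 * y2 * y3, ?_, by ring⟩
  · simp only [List.nodup_cons, List.mem_cons, List.not_mem_nil, not_or, or_false, not_false_eq_true, List.nodup_nil, and_true]
    refine ⟨⟨?_, ?_, ?_, ?_, ?_⟩, ⟨?_, ?_, ?_, ?_⟩, ⟨?_, ?_, ?_⟩, ⟨?_, ?_⟩, ?_⟩ <;>
      (apply key <;> first | assumption | (first | (left; assumption) | (right; assumption) | (left; apply Ne.symm; assumption)))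
  · have pos : ∀ u v : ℕ, (u, v) ∈ E → 0 < u * v := by
      intro u v h
      have := hE _ h
      rcases Nat.eq_zero_or_pos (u * v) with h' | h'
      · simp only [h'] at this; exact absurd this h0
      · exact h'
    have p1 := pos _ _ a
    have p2 := pos _ _ c
    have p3 := pos _ _ e
    have : x1 * x2 * x3 * y1 * y2 * y3 = (x1 * y1) * (x2 * y2) * (x3 * y3) := by ring
    rw [this]; positivity

theorem pairs_lemma (R : ℕ → ℕ → Prop) [DecidableRel R] (S : Finset ℕ)
    (h : ∀ a ∈ S, ∀ b ∈ S, ∀ c ∈ S, a ≠ b → a ≠ c → b ≠ c → R a b ∨ R a c ∨ R b c) :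
    S.card ≤ min 2 S.card + ((S ×ˢ S).filter (fun p => p.1 ≠ p.2 ∧ R p.1 p.2)).card := by
  induction S using Finset.strongInduction with
  | H S ih =>
    by_cases hc : S.card ≤ 2
    · simp [hc]
    · push Not at hc
      obtain ⟨a, ha, b, hb, c, hcS, hab, hac, hbc⟩ := Finset.two_lt_card.1 hc
      have : ∃ x ∈ S, ∃ y ∈ S, x ≠ y ∧ R x y := by
        rcases h a ha b hb c hcS hab hac hbc with h | h | h
        · exact ⟨a, ha, b, hb, hab, h⟩
        · exact ⟨a, ha, c, hcS, hac, h⟩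
        · exact ⟨b, hb, c, hcS, hbc, h⟩
      obtain ⟨x, hx, y, hy, hxy, hR⟩ := this
      have ih' := ih (S.erase x) (Finset.erase_ssubset hx) (by
        intro a ha b hb c hc
        exact h a (Finset.mem_of_mem_erase ha) b (Finset.mem_of_mem_erase hb) c (Finset.mem_of_mem_erase hc))
      rw [Finset.card_erase_of_mem hx] at ih'
      have hlt : (((S.erase x) ×ˢ (S.erase x)).filter (fun p => p.1 ≠ p.2 ∧ R p.1 p.2)).card <
          ((S ×ˢ S).filter (fun p => p.1 ≠ p.2 ∧ R p.1 p.2)).card := by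
        apply Finset.card_lt_card
        refine Finset.ssubset_iff_subset_ne.2 ⟨?_, ?_⟩
        · intro p hp
          simp only [Finset.mem_filter, Finset.mem_product, Finset.mem_erase] at hp ⊢
          tauto
        · intro heq
          have : (x, y) ∈ ((S ×ˢ S).filter (fun p => p.1 ≠ p.2 ∧ R p.1 p.2)) := by
            simp [hx, hy, hxy, hR]
          rw [← heq] at this
          simp at this
      omega

/-- neighbours on the left of `y` -/
def nbL (E : Finset (ℕ × ℕ)) (y : ℕ) : Finset ℕ := (E.filter (fun e => e.2 = y)).image Prod.fst

theorem mem_nbL {E : Finset (ℕ × ℕ)} {x y : ℕ} : x ∈ nbL E y ↔ (x, y) ∈ E := by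
  simp [nbL]

theorem card_nbL (E : Finset (ℕ × ℕ)) (y : ℕ) : (nbL E y).card = (E.filter (fun e => e.2 = y)).card := by
  apply Finset.card_image_of_injOn
  rintro ⟨a, b⟩ h1 ⟨c, d⟩ h2 h
  simp at h1 h2 h ⊢
  exact ⟨h, by rw [h1.2, h2.2]⟩

theorem card_eq_sum_nbL (E : Finset (ℕ × ℕ)) (V : Finset ℕ) (hV : ∀ e ∈ E, e.2 ∈ V) :
    E.card = ∑ y ∈ V, (nbL E y).card := by
  rw [Finset.card_eq_sum_card_fiberwise (f := Prod.snd) (t := V) (by intro e he; exact hV e he)]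
  exact Finset.sum_congr rfl (fun y _ => (card_nbL E y).symm)

theorem gyori (E : Finset (ℕ × ℕ)) (h6 : C6Free E) (U V : Finset ℕ)
    (hU : ∀ e ∈ E, e.1 ∈ U) (hV : ∀ e ∈ E, e.2 ∈ V) :
    E.card ≤ ∑ y ∈ V, min 2 (nbL E y).card + 2 * U.card ^ 2 := by
  classical
  let cod : ℕ → ℕ → Finset ℕ := fun a b => V.filter (fun y => (a, y) ∈ E ∧ (b, y) ∈ E)
  let R : ℕ → ℕ → Prop := fun a b => (cod a b).card ≤ 2
  have h1 : ∀ y ∈ V, (nbL E y).card ≤ min 2 (nbL E y).card +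
      ((nbL E y ×ˢ nbL E y).filter (fun p => p.1 ≠ p.2 ∧ R p.1 p.2)).card := by
    intro y hy
    apply pairs_lemma
    intro a ha b hb c hc hab hac hbc
    by_contra hcon
    push Not at hcon
    simp only [R, not_le] at hcon
    obtain ⟨r1, r2, r3⟩ := hcon
    obtain ⟨y1, hy1, hy1'⟩ : ∃ y1 ∈ cod a b, y1 ∉ ({y} : Finset ℕ) := by
      apply Finset.exists_mem_notMem_of_card_lt_card; rw [Finset.card_singleton]; omega
    obtain ⟨y2, hy2, hy2'⟩ : ∃ y2 ∈ cod a c, y2 ∉ ({y, y1} : Finset ℕ) := by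
      apply Finset.exists_mem_notMem_of_card_lt_card
      exact lt_of_le_of_lt (Finset.card_le_two) r2
    simp [cod] at hy1 hy2 hy1' hy2'
    rw [mem_nbL] at ha hb hc
    exact h6 c b a y y1 y2 (Ne.symm hbc) (Ne.symm hac) (Ne.symm hab) (Ne.symm hy1') (Ne.symm hy2'.1) (Ne.symm hy2'.2)
      hc hb hy1.2.2 hy1.2.1 hy2.2.1 hy2.2.2
  rw [card_eq_sum_nbL E V hV]
  refine (Finset.sum_le_sum h1).trans ?_
  rw [Finset.sum_add_distrib]
  apply Nat.add_le_add_left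
  have h2 : ∀ y ∈ V, ((nbL E y ×ˢ nbL E y).filter (fun p => p.1 ≠ p.2 ∧ R p.1 p.2)).card ≤
     ∑ p ∈ (U ×ˢ U), if (R p.1 p.2 ∧ (p.1, y) ∈ E ∧ (p.2, y) ∈ E) then 1 else 0 := by
    intro y hy
    rw [← Finset.card_filter]
    apply Finset.card_le_card
    intro p hp
    simp only [Finset.mem_filter, Finset.mem_product, mem_nbL] at hp ⊢
    exact ⟨⟨hU (p.1, y) hp.1.1, hU (p.2, y) hp.1.2⟩, hp.2.2, hp.1⟩
  refine (Finset.sum_le_sum h2).trans ?_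
  rw [Finset.sum_comm]
  have h3 : ∀ p ∈ (U ×ˢ U), (∑ y ∈ V, if (R p.1 p.2 ∧ (p.1, y) ∈ E ∧ (p.2, y) ∈ E) then 1 else 0) ≤ 2 := by
    intro p hp
    by_cases hR : R p.1 p.2
    · simp only [hR, true_and]
      rw [← Finset.card_filter]
      exact hR
    · simp [hR]
  refine (Finset.sum_le_sum h3).trans ?_
  simp
  nlinarith

/-- neighbours on the right of `x` -/
def nbR (E : Finset (ℕ × ℕ)) (y : ℕ) : Finset ℕ := (E.filter (fun e => e.1 = y)).image Prod.snd

theorem mem_nbR {E : Finset (ℕ × ℕ)} {x y : ℕ} : y ∈ nbR E x ↔ (x, y) ∈ E := by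
  simp [nbR]

theorem card_nbR (E : Finset (ℕ × ℕ)) (y : ℕ) : (nbR E y).card = (E.filter (fun e => e.1 = y)).card := by
  apply Finset.card_image_of_injOn
  rintro ⟨a, b⟩ h1 ⟨c, d⟩ h2 h
  simp at h1 h2 h ⊢
  exact ⟨by rw [h1.2, h2.2], h⟩

theorem bad_fiber {α : Type*} [DecidableEq α] (E : Finset α) (f : α → ℕ) (U : Finset ℕ) (hU : ∀ e ∈ E, f e ∈ U) :
    4 * (E.filter (fun e => 4 * U.card * (E.filter (fun e' => f e' = f e)).card < E.card)).card ≤ E.card := by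
  rcases U.eq_empty_or_nonempty with rfl | hne
  · have : E = ∅ := by
      apply Finset.eq_empty_of_forall_notMem
      intro e he; simpa using hU e he
    simp [this]
  have hpos : 0 < U.card := hne.card_pos
  set B := (E.filter (fun e => 4 * U.card * (E.filter (fun e' => f e' = f e)).card < E.card)) with hB
  have h1 : B.card = ∑ x ∈ U, (B.filter (fun e => f e = x)).card :=
    Finset.card_eq_sum_card_fiberwise (by intro e he; exact hU e (Finset.mem_of_mem_filter e he))
  have h2 : ∀ x ∈ U, 4 * U.card * (B.filter (fun e => f e = x)).card ≤ E.card := by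
    intro x hx
    rcases (B.filter (fun e => f e = x)).eq_empty_or_nonempty with h | ⟨e, he⟩
    · simp [h]
    · simp only [hB, Finset.mem_filter] at he
      obtain ⟨⟨he1, he2⟩, he3⟩ := he
      rw [he3] at he2
      refine le_trans ?_ he2.le
      apply Nat.mul_le_mul_left
      apply Finset.card_le_card
      exact Finset.filter_subset_filter _ (Finset.filter_subset _ _)
  have h3 : 4 * U.card * B.card ≤ U.card * E.card := by
    rw [h1, Finset.mul_sum]
    refine (Finset.sum_le_sum h2).trans ?_
    simp
  have : U.card * (4 * B.card) ≤ U.card * E.card := by linarith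
  exact Nat.le_of_mul_le_mul_left this hpos

theorem c4c6_bound (E : Finset (ℕ × ℕ)) (h6 : C6Free E) (h4 : C4Free E) (U V : Finset ℕ)
    (hU : ∀ e ∈ E, e.1 ∈ U) (hV : ∀ e ∈ E, e.2 ∈ V) :
    E.card ≤ 8 * (U.card + V.card) ∨ E.card ^ 3 ≤ 128 * (U.card * V.card) ^ 2 := by
  classical
  by_cases hsmall : E.card ≤ 8 * (U.card + V.card)
  · exact Or.inl hsmall
  right
  push Not at hsmall
  let P : ℕ × ℕ → Finset (ℕ × ℕ) := fun e => ((nbL E e.2).erase e.1) ×ˢ ((nbR E e.1).erase e.2)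
  have hP : (E.sigma P).card ≤ (U ×ˢ V).card := by
    apply Finset.card_le_card_of_injOn (fun s => s.2)
    · rintro ⟨⟨x, y⟩, ⟨x', y'⟩⟩ hs
      simp [P, mem_nbL, mem_nbR] at hs ⊢
      exact ⟨hU (x', y) hs.2.1.1, hV (x, y') hs.2.2.1⟩
    · rintro ⟨⟨x, y⟩, ⟨x', y'⟩⟩ hs ⟨⟨x1, y1⟩, ⟨x1', y1'⟩⟩ hs1 heq
      simp [P, mem_nbL, mem_nbR] at hs hs1 heq ⊢
      obtain ⟨rfl, rfl⟩ := heq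
      obtain ⟨a1, ⟨a3, a2⟩, a5, a4⟩ := hs
      obtain ⟨b1, ⟨b3, b2⟩, b5, b4⟩ := hs1
      by_cases hx : x = x1
      · subst hx
        by_cases hy : y = y1
        · simp [hy]
        · exact (h4 x x' y y1 (Ne.symm a2) hy a1 a3 b3 b1).elim
      · by_cases hy : y = y1
        · subst hy
          exact (h4 x x1 y y' hx (Ne.symm a4) a1 b1 b5 a5).elim
        · exact (h6 x' x x1 y y' y1 a2 b2 hx (Ne.symm a4) hy b4 a3 a1 a5 b5 b1 b3).elim
  rw [Finset.card_sigma, Finset.card_product] at hP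
  set G := E.filter (fun e => E.card ≤ 4 * U.card * (nbR E e.1).card ∧ E.card ≤ 4 * V.card * (nbL E e.2).card) with hG
  have hGc : E.card ≤ 2 * G.card := by
    have b1 := bad_fiber E Prod.fst U hU
    have b2 := bad_fiber E Prod.snd V hV
    simp only [← card_nbR, ← card_nbL] at b1 b2
    have : E ⊆ G ∪ ((E.filter (fun e => 4 * U.card * (nbR E e.1).card < E.card)) ∪
        (E.filter (fun e => 4 * V.card * (nbL E e.2).card < E.card))) := by
      intro e he
      simp only [hG, Finset.mem_union, Finset.mem_filter, he, true_and]
      omega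
    have h1 := Finset.card_le_card this
    have h2 := Finset.card_union_le G ((E.filter (fun e => 4 * U.card * (nbR E e.1).card < E.card)) ∪
        (E.filter (fun e => 4 * V.card * (nbL E e.2).card < E.card)))
    have h3 := Finset.card_union_le ((E.filter (fun e => 4 * U.card * (nbR E e.1).card < E.card))) 
        (E.filter (fun e => 4 * V.card * (nbL E e.2).card < E.card))
    omega
  have hterm : ∀ e ∈ G, E.card * E.card ≤ 64 * (U.card * V.card) * (P e).card := by
    intro e he
    simp only [hG, Finset.mem_filter] at he
    obtain ⟨he, g1, g2⟩ := he
    have m1 : e.1 ∈ nbL E e.2 := mem_nbL.2 he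
    have m2 : e.2 ∈ nbR E e.1 := mem_nbR.2 he
    simp only [P, Finset.card_product, Finset.card_erase_of_mem m1, Finset.card_erase_of_mem m2]
    obtain ⟨s, hs⟩ : ∃ s, (nbL E e.2).card = s + 1 := ⟨_, (Nat.succ_pred_eq_of_pos (Finset.card_pos.2 ⟨_, m1⟩)).symm⟩
    obtain ⟨t, ht⟩ : ∃ t, (nbR E e.1).card = t + 1 := ⟨_, (Nat.succ_pred_eq_of_pos (Finset.card_pos.2 ⟨_, m2⟩)).symm⟩
    rw [hs] at g2 ⊢
    rw [ht] at g1 ⊢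
    simp only [Nat.add_sub_cancel]
    have k1 : E.card ≤ 8 * U.card * t := by nlinarith
    have k2 : E.card ≤ 8 * V.card * s := by nlinarith
    calc E.card * E.card ≤ (8 * U.card * t) * (8 * V.card * s) := Nat.mul_le_mul k1 k2
      _ = _ := by ring
  have hsum : G.card * (E.card * E.card) ≤ 64 * (U.card * V.card) * (U.card * V.card) := by
    calc G.card * (E.card * E.card) = ∑ e ∈ G, E.card * E.card := by simp
      _ ≤ ∑ e ∈ G, 64 * (U.card * V.card) * (P e).card := Finset.sum_le_sum hterm
      _ = 64 * (U.card * V.card) * ∑ e ∈ G, (P e).card := by rw [Finset.mul_sum]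
      _ ≤ 64 * (U.card * V.card) * ∑ e ∈ E, (P e).card := by
          apply Nat.mul_le_mul_left
          apply Finset.sum_le_sum_of_subset
          exact Finset.filter_subset _ _
      _ ≤ _ := Nat.mul_le_mul_left _ hP
  calc E.card ^ 3 = E.card * (E.card * E.card) := by ring
    _ ≤ 2 * G.card * (E.card * E.card) := Nat.mul_le_mul_right _ hGc
    _ = 2 * (G.card * (E.card * E.card)) := by ring
    _ ≤ 2 * (64 * (U.card * V.card) * (U.card * V.card)) := Nat.mul_le_mul_left _ hsum
    _ = _ := by ring

def oppE (E : Finset (ℕ × ℕ)) (e d : ℕ × ℕ) : Prop :=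
  d.1 ≠ e.1 ∧ d.2 ≠ e.2 ∧ (d.1, e.2) ∈ E ∧ (e.1, d.2) ∈ E ∧ d ∈ E

theorem oppE_star (E : Finset (ℕ × ℕ)) (h6 : C6Free E) (e : ℕ × ℕ) (he : e ∈ E) :
    (∃ x', ∀ d, oppE E e d → d.1 = x') ∨ (∃ y', ∀ d, oppE E e d → d.2 = y') := by
  have key : ∀ d d', oppE E e d → oppE E e d' → d.1 = d'.1 ∨ d.2 = d'.2 := by
    rintro ⟨a, b⟩ ⟨a', b'⟩ ⟨h1, h2, h3, h4, h5⟩ ⟨k1, k2, k3, k4, k5⟩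
    by_contra hcon
    push Not at hcon
    obtain ⟨x, y⟩ := e
    simp only at *
    exact h6 x a a' b y b' (Ne.symm h1) (Ne.symm k1) hcon.1 h2 hcon.2 (Ne.symm k2) h4 h5 h3 k3 k5 k4
  by_cases hemp : ∃ d, oppE E e d
  · obtain ⟨d, hd⟩ := hemp
    by_cases hall : ∀ d', oppE E e d' → d'.1 = d.1
    · exact Or.inl ⟨_, hall⟩
    · push Not at hall
      obtain ⟨d2, hd2, hne⟩ := hall
      right
      refine ⟨d.2, fun d3 hd3 => ?_⟩
      have q1 := key _ _ hd hd2
      have q2 := key _ _ hd hd3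
      have q3 := key _ _ hd2 hd3
      omega
  · push Not at hemp
    exact Or.inl ⟨0, fun d hd => absurd hd (hemp d)⟩

theorem oppE_cases (E : Finset (ℕ × ℕ)) (h6 : C6Free E) (e : ℕ × ℕ) (he : e ∈ E) :
    (∀ d, oppE E e d → e.1 < d.1) ∨ (∀ d, oppE E e d → d.1 < e.1) ∨
    (∀ d, oppE E e d → e.2 < d.2) ∨ (∀ d, oppE E e d → d.2 < e.2) := by
  rcases oppE_star E h6 e he with ⟨x, hx⟩ | ⟨x, hx⟩
  · rcases le_or_gt x e.1 with h | h
    · right; left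
      intro d hd
      have := hx d hd
      have := hd.1
      omega
    · left
      intro d hd
      have := hx d hd
      omega
  · rcases le_or_gt x e.2 with h | h
    · right; right; right
      intro d hd
      have := hx d hd
      have := hd.2.1
      omega
    · right; right; left
      intro d hd
      have := hx d hd
      omega

theorem c4c6_real (E : Finset (ℕ × ℕ)) (h6 : C6Free E) (h4 : C4Free E) (U V : Finset ℕ)
    (hU : ∀ e ∈ E, e.1 ∈ U) (hV : ∀ e ∈ E, e.2 ∈ V) (T x μ n : ℝ) (hT : 0 ≤ T) (hx : 0 ≤ x)
    (hμ : 0 < μ) (hTn : T ^ 3 = n ^ 2) (hn : 0 ≤ n) (hUV : (U.card : ℝ) * V.card ≤ x * n) :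
    (E.card : ℝ) ≤ 8 * (U.card + V.card) + 4 * T * (x / μ + μ ^ 2) := by
  have hpos : 0 ≤ 4 * T * (x / μ + μ ^ 2) := by positivity
  rcases c4c6_bound E h6 h4 U V hU hV with h | h
  · have : (E.card : ℝ) ≤ 8 * (U.card + V.card) := by exact_mod_cast h
    linarith
  · have h' : (E.card : ℝ) ^ 3 ≤ 128 * ((U.card : ℝ) * V.card) ^ 2 := by exact_mod_cast h
    have h2 : ((U.card : ℝ) * V.card) ^ 2 ≤ (x * n) ^ 2 := by gcongr
    have h3 : (x * n) ^ 2 = x ^ 2 * T ^ 3 := by rw [hTn]; ring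
    have h4 : 3 * x ^ 2 ≤ (x / μ + μ ^ 2) ^ 3 := by
      have e1 : x ^ 2 = (x / μ) ^ 2 * μ ^ 2 := by field_simp
      rw [e1]
      have : 0 ≤ x / μ := by positivity
      set w := x / μ
      have : 0 ≤ w ^ 3 := by positivity
      have : 0 ≤ w * (μ ^ 2) ^ 2 := by positivity
      have : 0 ≤ (μ ^ 2) ^ 3 := by positivity
      nlinarith
    have h5 : (E.card : ℝ) ^ 3 ≤ (4 * T * (x / μ + μ ^ 2)) ^ 3 := by
      rw [mul_pow, mul_pow]
      have : 0 ≤ T ^ 3 := by positivity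
      have h6 := mul_le_mul_of_nonneg_left h4 this
      have : 0 ≤ T ^ 3 * x ^ 2 := by positivity
      nlinarith
    have h6 : (E.card : ℝ) ≤ (4 * T * (x / μ + μ ^ 2)) := le_of_pow_le_pow_left₀ (by norm_num) hpos h5
    have : (0 : ℝ) ≤ 8 * (U.card + V.card) := by positivity
    linarith

theorem c6_real (E : Finset (ℕ × ℕ)) (h6 : C6Free E) (U V : Finset ℕ)
    (hU : ∀ e ∈ E, e.1 ∈ U) (hV : ∀ e ∈ E, e.2 ∈ V) (T x μ n : ℝ) (hT : 0 ≤ T) (hx : 0 ≤ x)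
    (hμ : 0 < μ) (hTn : T ^ 3 = n ^ 2) (hn : 0 ≤ n) (hUV : (U.card : ℝ) * V.card ≤ x * n) :
    (E.card : ℝ) ≤ 32 * (U.card + V.card) + 16 * T * (x / μ + μ ^ 2) := by
  classical
  have key : ∀ F : Finset (ℕ × ℕ), F ⊆ E → C4Free F →
      (F.card : ℝ) ≤ 8 * (U.card + V.card) + 4 * T * (x / μ + μ ^ 2) := by
    intro F hF h4
    exact c4c6_real F (h6.mono hF) h4 U V (fun e he => hU e (hF he)) (fun e he => hV e (hF he)) T x μ n
      hT hx hμ hTn hn hUV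
  set F1 := E.filter (fun e => ∀ d, oppE E e d → e.1 < d.1) with hF1
  set F2 := E.filter (fun e => ∀ d, oppE E e d → d.1 < e.1) with hF2
  set F3 := E.filter (fun e => ∀ d, oppE E e d → e.2 < d.2) with hF3
  set F4 := E.filter (fun e => ∀ d, oppE E e d → d.2 < e.2) with hF4
  have opp : ∀ x1 x2 y1 y2, x1 ≠ x2 → y1 ≠ y2 → (x1,y1) ∈ E → (x2,y1) ∈ E → (x2,y2) ∈ E → (x1,y2) ∈ E →
      oppE E (x1, y1) (x2, y2) := by
    intro x1 x2 y1 y2 h1 h2 a b c d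
    exact ⟨Ne.symm h1, Ne.symm h2, b, d, c⟩
  have k1 : C4Free F1 := by
    intro x1 x2 y1 y2 hx hy a b c d
    simp only [hF1, Finset.mem_filter] at a b c d
    have := a.2 _ (opp x1 x2 y1 y2 hx hy a.1 b.1 c.1 d.1)
    have := b.2 _ (opp x2 x1 y1 y2 (Ne.symm hx) hy b.1 a.1 d.1 c.1)
    simp only at *; omega
  have k2 : C4Free F2 := by
    intro x1 x2 y1 y2 hx hy a b c d
    simp only [hF2, Finset.mem_filter] at a b c d
    have := a.2 _ (opp x1 x2 y1 y2 hx hy a.1 b.1 c.1 d.1)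
    have := b.2 _ (opp x2 x1 y1 y2 (Ne.symm hx) hy b.1 a.1 d.1 c.1)
    simp only at *; omega
  have k3 : C4Free F3 := by
    intro x1 x2 y1 y2 hx hy a b c d
    simp only [hF3, Finset.mem_filter] at a b c d
    have := a.2 _ (opp x1 x2 y1 y2 hx hy a.1 b.1 c.1 d.1)
    have := d.2 _ (opp x1 x2 y2 y1 hx (Ne.symm hy) d.1 c.1 b.1 a.1)
    simp only at *; omega
  have k4 : C4Free F4 := by
    intro x1 x2 y1 y2 hx hy a b c d
    simp only [hF4, Finset.mem_filter] at a b c d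
    have := a.2 _ (opp x1 x2 y1 y2 hx hy a.1 b.1 c.1 d.1)
    have := d.2 _ (opp x1 x2 y2 y1 hx (Ne.symm hy) d.1 c.1 b.1 a.1)
    simp only at *; omega
  have c1 := key F1 (Finset.filter_subset _ _) k1
  have c2 := key F2 (Finset.filter_subset _ _) k2
  have c3 := key F3 (Finset.filter_subset _ _) k3
  have c4 := key F4 (Finset.filter_subset _ _) k4
  have hsub : E ⊆ (F1 ∪ F2) ∪ (F3 ∪ F4) := by
    intro e he
    have := oppE_cases E h6 e he
    simp only [hF1, hF2, hF3, hF4, Finset.mem_union, Finset.mem_filter, he, true_and]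
    tauto
  have hc : E.card ≤ (F1.card + F2.card) + (F3.card + F4.card) :=
    (Finset.card_le_card hsub).trans ((Finset.card_union_le _ _).trans
      (Nat.add_le_add (Finset.card_union_le _ _) (Finset.card_union_le _ _)))
  have hc' : (E.card : ℝ) ≤ (F1.card + F2.card) + (F3.card + F4.card) := by exact_mod_cast hc
  linarith

def Rough (z m : ℕ) : Prop := ∀ p : ℕ, p.Prime → p ∣ m → z < p
def Smooth (z m : ℕ) : Prop := ∀ p : ℕ, p.Prime → p ∣ m → p ≤ z

theorem divmin (s r n : ℕ) (hs : s ^ 3 ≤ n) (h : n < (s * r) ^ 3)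
    (hr : ∀ p : ℕ, p.Prime → p ∣ r → p ^ 3 ≤ n) :
    ∃ d, d ∣ r ∧ n < (s * d) ^ 3 ∧ (s * d) ^ 3 ≤ n ^ 2 := by
  classical
  have hex : ∃ d, d ∣ r ∧ n < (s * d) ^ 3 := ⟨r, dvd_rfl, h⟩
  obtain ⟨h1, h2⟩ := Nat.find_spec hex
  have hmin := fun m => @Nat.find_min _ _ hex m
  set d := Nat.find hex
  refine ⟨d, h1, h2, ?_⟩
  have hd1 : d ≠ 1 := by
    intro h; rw [h, mul_one] at h2; omega
  have hd0 : d ≠ 0 := by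
    intro h; rw [h] at h2; simp at h2
  have hp := Nat.minFac_prime hd1
  obtain ⟨e, he⟩ := Nat.minFac_dvd d
  set q := d.minFac
  have he0 : 0 < e := by
    rcases Nat.eq_zero_or_pos e with h | h
    · rw [h, mul_zero] at he; exact absurd he hd0
    · exact h
  have hed : e < d := by
    rw [he]; nlinarith [hp.two_le]
  have hm := hmin e hed
  have her : e ∣ r := (Dvd.intro_left q he.symm).trans h1
  have hle : (s * e) ^ 3 ≤ n := by
    by_contra hcon
    exact hm ⟨her, by omega⟩
  have hq := hr q hp ((Nat.minFac_dvd d).trans h1)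
  calc (s * d) ^ 3 = q ^ 3 * (s * e) ^ 3 := by rw [he]; ring
    _ ≤ n * n := Nat.mul_le_mul hq hle
    _ = n ^ 2 := by ring

theorem smooth_rough (z a : ℕ) (ha : a ≠ 0) : ∃ s r, s * r = a ∧ Smooth z s ∧ Rough z r := by
  induction a using Nat.recOnMul with
  | zero => exact absurd rfl ha
  | one => exact ⟨1, 1, rfl, fun p hp h => absurd (Nat.dvd_one.1 h) hp.one_lt.ne', fun p hp h => absurd (Nat.dvd_one.1 h) hp.one_lt.ne'⟩
  | prime p hp =>
    have h1 : ∀ q : ℕ, q.Prime → q ∣ 1 → False := fun q hq h => absurd (Nat.dvd_one.1 h) hq.one_lt.ne'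
    by_cases h : p ≤ z
    · refine ⟨p, 1, mul_one p, fun q hq hd => ?_, fun q hq hd => (h1 q hq hd).elim⟩
      rw [(Nat.prime_dvd_prime_iff_eq hq hp).1 hd]; exact h
    · refine ⟨1, p, one_mul p, fun q hq hd => (h1 q hq hd).elim, fun q hq hd => ?_⟩
      rw [(Nat.prime_dvd_prime_iff_eq hq hp).1 hd]; omega
  | mul a b iha ihb =>
    obtain ⟨s, r, h1, h2, h3⟩ := iha (by rintro rfl; simp at ha)
    obtain ⟨s', r', h1', h2', h3'⟩ := ihb (by rintro rfl; simp at ha)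
    refine ⟨s * s', r * r', by rw [← h1, ← h1']; ring, fun q hq hd => ?_, fun q hq hd => ?_⟩
    · rcases hq.dvd_mul.1 hd with h | h
      · exact h2 q hq h
      · exact h2' q hq h
    · rcases hq.dvd_mul.1 hd with h | h
      · exact h3 q hq h
      · exact h3' q hq h

theorem cube_cofactor {u v n : ℕ} (h : u * v ≤ n) (k : ℕ) (hk : k = n ^ 2) (hv : k < v ^ 3) : u ^ 3 ≤ n := by
  by_contra hcon
  push Not at hcon
  have h1 : (u * v) ^ 3 ≤ n ^ 3 := Nat.pow_le_pow_left h 3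
  have h2 : n * n ^ 2 < u ^ 3 * v ^ 3 := Nat.mul_lt_mul'' hcon (hk ▸ hv)
  rw [← mul_pow] at h2
  have : n * n ^ 2 = n ^ 3 := by ring
  omega

theorem cube_cofactor2 {u v n : ℕ} (h : u * v ≤ n) (hv : n < v ^ 3) : u ^ 3 ≤ n ^ 2 := by
  by_contra hcon
  push Not at hcon
  have h1 : (u * v) ^ 3 ≤ n ^ 3 := Nat.pow_le_pow_left h 3
  have h2 : n ^ 2 * n < u ^ 3 * v ^ 3 := Nat.mul_lt_mul'' hcon hv
  rw [← mul_pow] at h2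
  have : n ^ 2 * n = n ^ 3 := by ring
  omega

theorem decomp (n z a : ℕ) (hn : 1 ≤ n) (hz : z ^ 3 ≤ n) (ha : 1 ≤ a) (han : a ≤ n) :
    ∃ u v, u * v = a ∧ ((u ^ 3 ≤ n ∧ v.Prime ∧ n ^ 2 < v ^ 3) ∨ (u ^ 3 ≤ n ∧ v ^ 3 ≤ n ^ 2) ∨
      (n < u ^ 3 ∧ u ^ 3 ≤ n ^ 2 ∧ Rough z u) ∨ (n < u ^ 3 ∧ u ^ 3 ≤ n ^ 2 ∧ Smooth z u)) := by
  by_cases h1 : ∃ p : ℕ, p.Prime ∧ p ∣ a ∧ n ^ 2 < p ^ 3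
  · obtain ⟨p, hp, ⟨c, hc⟩, hp3⟩ := h1
    refine ⟨c, p, by rw [hc]; ring, Or.inl ⟨?_, hp, hp3⟩⟩
    exact cube_cofactor (v := p) (by rw [mul_comm, ← hc]; exact han) _ rfl hp3
  push Not at h1
  by_cases h2 : a ^ 3 ≤ n ^ 2
  · exact ⟨1, a, one_mul a, Or.inr (Or.inl ⟨by simpa using hn, h2⟩)⟩
  push Not at h2
  by_cases h3 : ∃ q : ℕ, q.Prime ∧ q ∣ a ∧ n < q ^ 3
  · obtain ⟨q, hq, ⟨c, hc⟩, hq3⟩ := h3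
    refine ⟨q, c, hc.symm, Or.inr (Or.inr (Or.inl ⟨hq3, h1 q hq ⟨c, hc⟩, ?_⟩))⟩
    intro p hp hd
    rw [(Nat.prime_dvd_prime_iff_eq hp hq).1 hd]
    exact lt_of_pow_lt_pow_left' 3 (lt_of_le_of_lt hz hq3)
  push Not at h3
  obtain ⟨s, r, hsr, hs, hr⟩ := smooth_rough z a (by omega)
  by_cases h4 : n < s ^ 3
  · obtain ⟨d, hd, hd1, hd2⟩ := divmin 1 s n (by simpa using hn) (by simpa using h4)
      (fun p hp h => h3 p hp (h.trans ⟨r, hsr.symm⟩))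
    rw [one_mul] at hd1 hd2
    obtain ⟨c, hc⟩ := hd.trans ⟨r, hsr.symm⟩
    exact ⟨d, c, hc.symm, Or.inr (Or.inr (Or.inr ⟨hd1, hd2, fun p hp h => hs p hp (h.trans hd)⟩))⟩
  · push Not at h4
    obtain ⟨d, ⟨u, hu⟩, hd1, hd2⟩ := divmin s r n h4 (by rw [hsr]; nlinarith)
      (fun p hp h => h3 p hp (h.trans ⟨s, by rw [mul_comm]; exact hsr.symm⟩))
    have huv : u * (s * d) = a := by rw [← hsr, hu]; ring
    refine ⟨u, s * d, huv, ?_⟩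
    by_cases h5 : u ^ 3 ≤ n
    · exact Or.inr (Or.inl ⟨h5, hd2⟩)
    · push Not at h5
      refine Or.inr (Or.inr (Or.inl ⟨h5, cube_cofactor2 (by rw [huv]; exact han) hd1, ?_⟩))
      exact fun p hp h => hr p hp (h.trans ⟨d, by rw [hu]; ring⟩)

theorem rough_sum (n z : ℕ) (S : Finset ℕ) (hS : ∀ u ∈ S, 1 ≤ u ∧ u ≤ n ∧ Rough z u) :
    (∑ u ∈ S, (u : ℝ)⁻¹) * (∑ s ∈ Finset.Icc 1 z, (s : ℝ)⁻¹) ≤ ∑ m ∈ Finset.Icc 1 (n * z), (m : ℝ)⁻¹ := by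
  classical
  rw [Finset.sum_mul_sum, ← Finset.sum_product']
  have hinj : Set.InjOn (fun p : ℕ × ℕ => p.1 * p.2) (S ×ˢ Finset.Icc 1 z : Finset (ℕ × ℕ)) := by
    rintro ⟨u, s⟩ h1 ⟨u', s'⟩ h2 heq
    simp only [Finset.coe_product, Set.mem_prod, Finset.mem_coe, Finset.mem_Icc] at h1 h2 heq
    have cop : ∀ u s, Rough z u → 1 ≤ s → s ≤ z → Nat.Coprime u s := by
      intro u s hu h1 h2
      apply Nat.Coprime.symm
      apply Nat.coprime_of_dvd
      intro p hp hps hpu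
      have := hu p hp hpu
      have := Nat.le_of_dvd (by omega) hps
      omega
    have c1 := cop u s' (hS u h1.1).2.2 h2.2.1 h2.2.2
    have c2 := cop u' s (hS u' h2.1).2.2 h1.2.1 h1.2.2
    have d1 : u ∣ u' := c1.dvd_of_dvd_mul_right (heq ▸ Dvd.intro _ rfl)
    have d2 : u' ∣ u := c2.dvd_of_dvd_mul_right (heq ▸ Dvd.intro _ rfl)
    have : u = u' := Nat.dvd_antisymm d1 d2
    subst this
    have := Nat.eq_of_mul_eq_mul_left (hS u h1.1).1 heq
    rw [this]
  have : ∑ x ∈ S ×ˢ Finset.Icc 1 z, (x.1 : ℝ)⁻¹ * (x.2 : ℝ)⁻¹ =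
      ∑ m ∈ (S ×ˢ Finset.Icc 1 z).image (fun p : ℕ × ℕ => p.1 * p.2), (m : ℝ)⁻¹ := by
    rw [Finset.sum_image hinj]
    apply Finset.sum_congr rfl
    intro x _
    push_cast
    rw [mul_inv]
  rw [this]
  apply Finset.sum_le_sum_of_subset_of_nonneg
  · intro m hm
    simp only [Finset.mem_image, Finset.mem_product, Finset.mem_Icc] at hm ⊢
    obtain ⟨⟨u, s⟩, ⟨h1, h2, h3⟩, rfl⟩ := hm
    have := hS u h1
    exact ⟨Nat.mul_pos this.1 h2, Nat.mul_le_mul this.2.1 h3⟩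
  · intro m _ _; positivity

theorem harm_upper (n : ℕ) : ∑ m ∈ Finset.Icc 1 n, (m : ℝ)⁻¹ ≤ 1 + Real.log n := by
  have := harmonic_le_one_add_log n
  rw [harmonic_eq_sum_Icc] at this
  push_cast at this
  exact this

theorem harm_lower (n : ℕ) : Real.log (n + 1) ≤ ∑ m ∈ Finset.Icc 1 n, (m : ℝ)⁻¹ := by
  have := log_add_one_le_harmonic n
  rw [harmonic_eq_sum_Icc] at this
  push_cast at this
  exact this

noncomputable def powHom (σ : ℝ) : ℕ →* ℝ where
  toFun m := (m : ℝ) ^ σ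
  map_one' := by simp
  map_mul' a b := by
    push_cast
    exact Real.mul_rpow (Nat.cast_nonneg a) (Nat.cast_nonneg b)

theorem inv_one_sub_le (x : ℝ) (h0 : 0 ≤ x) (h1 : x ≤ 3 / 4) : (1 - x)⁻¹ ≤ Real.exp (4 * x) := by
  have e1 : (1 - x)⁻¹ = x / (1 - x) + 1 := by
    have : (1 - x) ≠ 0 := by linarith
    field_simp; ring
  rw [e1]
  refine (Real.add_one_le_exp _).trans ?_
  apply Real.exp_le_exp.2
  rw [div_le_iff₀ (by linarith)]
  nlinarith

theorem smooth_sum (n z : ℕ) (t : ℝ) (ht : 1 ≤ t) (hn : 1 ≤ n) (hz : 1 ≤ z) (hzt : Real.log z ≤ t)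
    (S : Finset ℕ) (hS : ∀ u ∈ S, n < u ^ 3 ∧ Smooth z u) :
    ∑ u ∈ S, (u : ℝ)⁻¹ ≤ Real.exp (6 + 6 * t - Real.log n / (9 * t)) := by
  classical
  set τ : ℝ := 1 / (3 * t) with hτ
  have hτ0 : 0 < τ := by positivity
  have hτ1 : τ ≤ 1 / 3 := by
    rw [hτ, div_le_div_iff₀ (by positivity) (by norm_num)]; linarith
  have hσ : τ - 1 ≠ 0 := by linarith
  set f := powHom (τ - 1) with hf
  have hfm : ∀ m : ℕ, f m = (m : ℝ) ^ (τ - 1) := fun m => rfl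
  have hfp : ∀ p : ℕ, p.Prime → ‖f p‖ < 1 := by
    intro p hp
    rw [hfm, Real.norm_of_nonneg (by positivity)]
    apply Real.rpow_lt_one_of_one_lt_of_neg
    · exact_mod_cast hp.one_lt
    · linarith
  obtain ⟨-, hsum⟩ := EulerProduct.summable_and_hasSum_smoothNumbers_prod_primesBelow_geometric (f := f)
    (fun {p} hp => hfp p hp) (z + 1)
  have hmem : ∀ u ∈ S, u ∈ Nat.smoothNumbers (z + 1) := by
    intro u hu
    rw [Nat.mem_smoothNumbers']
    intro p hp hd
    have := (hS u hu).2 p hp hd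
    omega
  have h1 : ∑ u ∈ S, f u ≤ ∏ p ∈ (z + 1).primesBelow, (1 - f p)⁻¹ := by
    have := sum_le_hasSum (S.subtype (fun u => u ∈ Nat.smoothNumbers (z + 1)))
      (fun i _ => by rw [hfm]; positivity) hsum
    rwa [Finset.sum_subtype_of_mem (fun u => f u) hmem] at this
  have he : Real.exp (1 / 3) ≤ 3 / 2 := by
    have h3 : Real.exp (1 / 3) ^ 3 ≤ (3 / 2 : ℝ) ^ 3 := by
      rw [← Real.exp_nat_mul]
      have := Real.exp_one_lt_d9
      norm_num
      linarith
    exact le_of_pow_le_pow_left₀ (by norm_num) (by norm_num) h3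
  have h2 : ∏ p ∈ (z + 1).primesBelow, (1 - f p)⁻¹ ≤ Real.exp (6 * (1 + t)) := by
    calc ∏ p ∈ (z + 1).primesBelow, (1 - f p)⁻¹ ≤ ∏ p ∈ (z + 1).primesBelow, Real.exp (6 * (p : ℝ)⁻¹) := by
          apply Finset.prod_le_prod
          · intro p hp
            have := hfp p (Nat.prime_of_mem_primesBelow hp)
            have := le_abs_self (f p)
            rw [Real.norm_eq_abs] at *
            exact inv_nonneg.2 (by linarith)
          · intro p hp
            have hpp := Nat.prime_of_mem_primesBelow hp
            have hpz : p < z + 1 := Nat.lt_of_mem_primesBelow hp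
            have hp2 : (2 : ℝ) ≤ p := by exact_mod_cast hpp.two_le
            have hp0 : (0 : ℝ) < p := by linarith
            have hfle : f p ≤ 3 / 2 * (p : ℝ)⁻¹ := by
              rw [hfm, Real.rpow_sub hp0, Real.rpow_one, div_eq_mul_inv]
              apply mul_le_mul_of_nonneg_right _ (by positivity)
              refine le_trans ?_ he
              rw [Real.rpow_def_of_pos hp0]
              apply Real.exp_le_exp.2
              have : Real.log p ≤ t := by
                refine le_trans ?_ hzt
                apply Real.log_le_log hp0
                exact_mod_cast Nat.lt_succ_iff.1 hpz
              calc Real.log p * τ ≤ t * τ := by gcongr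
                _ = 1 / 3 := by rw [hτ]; field_simp
            have hinv : (p : ℝ)⁻¹ ≤ 1 / 2 := by
              rw [inv_le_comm₀ hp0 (by norm_num)]; norm_num; exact hpp.two_le
            refine (inv_one_sub_le (f p) (by rw [hfm]; positivity) (by linarith)).trans ?_
            apply Real.exp_le_exp.2
            linarith
      _ = Real.exp (6 * ∑ p ∈ (z + 1).primesBelow, (p : ℝ)⁻¹) := by
          rw [← Real.exp_sum, Finset.mul_sum]
      _ ≤ Real.exp (6 * (1 + t)) := by
          apply Real.exp_le_exp.2
          have : ∑ p ∈ (z + 1).primesBelow, (p : ℝ)⁻¹ ≤ ∑ m ∈ Finset.Icc 1 z, (m : ℝ)⁻¹ := by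
            apply Finset.sum_le_sum_of_subset_of_nonneg
            · intro p hp
              have hpp := Nat.prime_of_mem_primesBelow hp
              have hpz : p < z + 1 := Nat.lt_of_mem_primesBelow hp
              have := hpp.one_lt
              rw [Finset.mem_Icc]; omega
            · intro m _ _; positivity
          have := harm_upper z
          linarith
  have h3 : ∀ u ∈ S, (u : ℝ)⁻¹ ≤ Real.exp (- (Real.log n / (9 * t))) * f u := by
    intro u hu
    have hu3 := (hS u hu).1
    have hu0 : 0 < u := by
      rcases Nat.eq_zero_or_pos u with h | h
      · rw [h] at hu3; simp at hu3
      · exact h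
    have hu0' : (0 : ℝ) < u := by exact_mod_cast hu0
    have hlog : Real.log n ≤ 3 * Real.log u := by
      have : Real.log n ≤ Real.log ((u : ℝ) ^ 3) := by
        apply Real.log_le_log (by exact_mod_cast hn)
        exact_mod_cast hu3.le
      rw [Real.log_pow] at this
      exact_mod_cast this
    rw [hfm, Real.rpow_def_of_pos hu0', ← Real.exp_add]
    have : (u : ℝ)⁻¹ = Real.exp (- Real.log u) := by rw [Real.exp_neg, Real.exp_log hu0']
    rw [this]
    apply Real.exp_le_exp.2
    have h9 : Real.log n / (9 * t) = Real.log n / 3 * τ := by rw [hτ]; field_simp; norm_num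
    rw [h9]
    nlinarith
  calc ∑ u ∈ S, (u : ℝ)⁻¹ ≤ ∑ u ∈ S, Real.exp (- (Real.log n / (9 * t))) * f u := Finset.sum_le_sum h3
    _ = Real.exp (- (Real.log n / (9 * t))) * ∑ u ∈ S, f u := by rw [Finset.mul_sum]
    _ ≤ Real.exp (- (Real.log n / (9 * t))) * Real.exp (6 * (1 + t)) := by
        gcongr; exact h1.trans h2
    _ = _ := by rw [← Real.exp_add]; congr 1; ring

theorem geom_Icc (a b : ℕ) : ∑ i ∈ Finset.Icc a b, (1 / 2 : ℝ) ^ i ≤ 2 * (1 / 2 : ℝ) ^ a := by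
  have : Finset.Icc a b = Finset.Ico a (b + 1) := by ext; simp
  rw [this, Finset.sum_Ico_eq_sum_range]
  simp only [pow_add]
  rw [← Finset.mul_sum, mul_comm]
  gcongr
  exact sum_geometric_two_le _

theorem cube_le_T {u n : ℕ} {T : ℝ} (hT : 0 ≤ T) (hTn : T ^ 3 = (n : ℝ) ^ 2) (h : u ^ 3 ≤ n ^ 2) : (u : ℝ) ≤ T := by
  apply le_of_pow_le_pow_left₀ (n := 3) (by norm_num) hT
  rw [hTn]; exact_mod_cast h

theorem dyadic (n : ℕ) (hn : 1 ≤ n) (E : Finset (ℕ × ℕ)) (h6 : C6Free E) (T μ : ℝ) (hT : 0 ≤ T)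
    (hμ : 0 < μ) (hTn : T ^ 3 = (n : ℝ) ^ 2) (S : Finset ℕ) (hS : ∀ e ∈ E, e.1 ∈ S)
    (hS3 : ∀ u ∈ S, n < u ^ 3 ∧ u ^ 3 ≤ n ^ 2) (hE : ∀ e ∈ E, 1 ≤ e.2 ∧ e.1 * e.2 ≤ n) :
    (E.card : ℝ) ≤ 160 * T + 16 * T * (2 * (∑ u ∈ S, (u : ℝ)⁻¹) / μ + μ ^ 2 * (Nat.log 2 n + 1)) := by
  classical
  have hex : ∃ k : ℕ, n < k ^ 3 := ⟨n + 1, by nlinarith [Nat.zero_le (n^3), Nat.zero_le (n^2)]⟩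
  have hk := Nat.find_spec hex
  have hkmin := fun m => @Nat.find_min' _ _ hex m
  set k := Nat.find hex
  have hk0 : 0 < k := by
    rcases Nat.eq_zero_or_pos k with h | h
    · rw [h] at hk; simp at hk
    · exact h
  set i0 := Nat.log 2 k with hi0
  set I := Finset.Icc i0 (Nat.log 2 n) with hI
  have hSI : ∀ u ∈ S, Nat.log 2 u ∈ I := by
    intro u hu
    obtain ⟨h1, h2⟩ := hS3 u hu
    rw [hI, Finset.mem_Icc]
    refine ⟨Nat.log_mono_right (hkmin u h1), Nat.log_mono_right ?_⟩
    by_contra hcon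
    push Not at hcon
    have h3 : n ^ 3 < u ^ 3 := Nat.pow_lt_pow_left hcon (by norm_num)
    nlinarith [Nat.zero_le (n^2)]
  have hSpos : ∀ u ∈ S, 0 < u := by
    intro u hu
    have := (hS3 u hu).1
    rcases Nat.eq_zero_or_pos u with h | h
    · rw [h] at this; simp at this
    · exact h
  let Ui : ℕ → Finset ℕ := fun i => S.filter (fun u => Nat.log 2 u = i)
  let Ei : ℕ → Finset (ℕ × ℕ) := fun i => E.filter (fun e => Nat.log 2 e.1 = i)
  let Vi : ℕ → Finset ℕ := fun i => Finset.Icc 1 (n / 2 ^ i)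
  have hVc : ∀ i, ((Vi i).card : ℝ) ≤ n * (1 / 2 : ℝ) ^ i := by
    intro i
    simp only [Vi, Nat.card_Icc, Nat.add_sub_cancel]
    refine Nat.cast_div_le.trans ?_
    push_cast
    rw [one_div, inv_pow, div_eq_mul_inv]
  have hUc : ∀ i, ((Ui i).card : ℝ) ≤ 2 ^ i * (2 * ∑ u ∈ Ui i, (u : ℝ)⁻¹) := by
    intro i
    rw [Finset.mul_sum, Finset.mul_sum, Finset.card_eq_sum_ones]
    push_cast
    apply Finset.sum_le_sum
    intro u hu
    simp only [Ui, Finset.mem_filter] at hu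
    have hp := hSpos u hu.1
    have h1 : u < 2 ^ (i + 1) := by
      rw [← hu.2]; exact Nat.lt_pow_succ_log_self (by norm_num) u
    have h2 : (u : ℝ) ≤ 2 ^ i * 2 := by
      rw [← pow_succ]; exact_mod_cast h1.le
    have hp' : (0 : ℝ) < u := by exact_mod_cast hp
    rw [← mul_assoc, ← div_eq_mul_inv, one_le_div hp']
    exact h2
  have hmain : ∀ i ∈ I, ((Ei i).card : ℝ) ≤ 32 * ((Ui i).card + (Vi i).card) +
      16 * T * ((2 * ∑ u ∈ Ui i, (u : ℝ)⁻¹) / μ + μ ^ 2) := by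
    intro i hi
    apply c6_real (Ei i) (h6.mono (Finset.filter_subset _ _)) (Ui i) (Vi i) _ _ T _ μ n hT _ hμ hTn (by positivity)
    · calc ((Ui i).card : ℝ) * (Vi i).card ≤ (2 ^ i * (2 * ∑ u ∈ Ui i, (u : ℝ)⁻¹)) * (n * (1 / 2 : ℝ) ^ i) := by
            apply mul_le_mul (hUc i) (hVc i) (by positivity) (by positivity)
        _ = (2 * (1 / 2) : ℝ) ^ i * ((2 * ∑ u ∈ Ui i, (u : ℝ)⁻¹) * n) := by rw [mul_pow]; ring
        _ = _ := by norm_num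
    · intro e he
      simp only [Ei, Ui, Finset.mem_filter] at he ⊢
      exact ⟨hS e he.1, he.2⟩
    · intro e he
      simp only [Ei, Vi, Finset.mem_filter, Finset.mem_Icc] at he ⊢
      obtain ⟨h1, h2⟩ := hE e he.1
      refine ⟨h1, ?_⟩
      rw [Nat.le_div_iff_mul_le (by positivity)]
      have : 2 ^ i ≤ e.1 := by
        rw [← he.2]; exact Nat.pow_log_le_self 2 (hSpos _ (hS e he.1)).ne'
      calc e.2 * 2 ^ i ≤ e.2 * e.1 := Nat.mul_le_mul_left _ this
        _ = e.1 * e.2 := mul_comm _ _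
        _ ≤ n := h2
    · positivity
  have hEc : (E.card : ℝ) = ∑ i ∈ I, ((Ei i).card : ℝ) := by
    rw [Finset.card_eq_sum_card_fiberwise (f := fun e : ℕ × ℕ => Nat.log 2 e.1) (t := I)
      (by intro e he; exact hSI _ (hS e he))]
    push_cast; rfl
  have hScard : (S.card : ℝ) = ∑ i ∈ I, ((Ui i).card : ℝ) := by
    rw [Finset.card_eq_sum_card_fiberwise (f := fun e : ℕ => Nat.log 2 e) (t := I)
      (by intro e he; exact hSI _ he)]
    push_cast; rfl
  have hSsum : ∑ i ∈ I, ∑ u ∈ Ui i, (u : ℝ)⁻¹ = ∑ u ∈ S, (u : ℝ)⁻¹ :=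
    Finset.sum_fiberwise_of_maps_to hSI _
  have hST : (S.card : ℝ) ≤ T := by
    have : S ⊆ Finset.Icc 1 ⌊T⌋₊ := by
      intro u hu
      rw [Finset.mem_Icc]
      exact ⟨hSpos u hu, Nat.le_floor (cube_le_T hT hTn (hS3 u hu).2)⟩
    have h := Finset.card_le_card this
    simp at h
    exact (Nat.cast_le.2 h).trans (Nat.floor_le hT)
  have hVsum : ∑ i ∈ I, ((Vi i).card : ℝ) ≤ 4 * T := by
    calc ∑ i ∈ I, ((Vi i).card : ℝ) ≤ ∑ i ∈ I, n * (1 / 2 : ℝ) ^ i := Finset.sum_le_sum (fun i _ => hVc i)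
      _ = n * ∑ i ∈ I, (1 / 2 : ℝ) ^ i := by rw [Finset.mul_sum]
      _ ≤ n * (2 * (1 / 2 : ℝ) ^ i0) := by gcongr; exact geom_Icc _ _
      _ ≤ n * (4 / k) := by
          gcongr
          have h1 : k < 2 ^ (i0 + 1) := Nat.lt_pow_succ_log_self (by norm_num) k
          have h2 : (k : ℝ) ≤ 2 ^ i0 * 2 := by
            rw [← pow_succ]; exact_mod_cast h1.le
          have hk' : (0 : ℝ) < k := by exact_mod_cast hk0
          rw [le_div_iff₀ hk']
          have h3 : (1 / 2 : ℝ) ^ i0 * 2 ^ i0 = 1 := by rw [← mul_pow]; norm_num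
          have h4 : (0 : ℝ) < (1 / 2 : ℝ) ^ i0 := by positivity
          nlinarith
      _ = 4 * (n / k) := by ring
      _ ≤ 4 * T := by
          gcongr
          have hk' : (0 : ℝ) < k := by exact_mod_cast hk0
          apply le_of_pow_le_pow_left₀ (n := 3) (by norm_num) hT
          rw [hTn, div_pow, div_le_iff₀ (by positivity)]
          have : (n : ℝ) ≤ (k : ℝ) ^ 3 := by exact_mod_cast hk.le
          calc (n : ℝ) ^ 3 = n ^ 2 * n := by ring
            _ ≤ _ := by gcongr
  have hIc : (I.card : ℝ) ≤ Nat.log 2 n + 1 := by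
    have : I.card ≤ Nat.log 2 n + 1 := by simp [hI]
    exact_mod_cast this
  rw [hEc]
  calc ∑ i ∈ I, ((Ei i).card : ℝ) ≤ ∑ i ∈ I, (32 * ((Ui i).card + (Vi i).card) +
      16 * T * ((2 * ∑ u ∈ Ui i, (u : ℝ)⁻¹) / μ + μ ^ 2)) := Finset.sum_le_sum hmain
    _ = 32 * (∑ i ∈ I, ((Ui i).card : ℝ) + ∑ i ∈ I, ((Vi i).card : ℝ)) +
        16 * T * ((2 * ∑ i ∈ I, ∑ u ∈ Ui i, (u : ℝ)⁻¹) / μ + I.card * μ ^ 2) := by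
        rw [Finset.sum_add_distrib, ← Finset.mul_sum, ← Finset.mul_sum, Finset.sum_add_distrib,
          Finset.sum_add_distrib, ← Finset.sum_div, ← Finset.mul_sum]
        simp
    _ ≤ _ := by
        rw [hSsum, ← hScard]
        have : (I.card : ℝ) * μ ^ 2 ≤ μ ^ 2 * (Nat.log 2 n + 1) := by
          rw [mul_comm]; gcongr
        have h2 : 16 * T * ((2 * ∑ u ∈ S, (u : ℝ)⁻¹) / μ + I.card * μ ^ 2) ≤
          16 * T * ((2 * ∑ u ∈ S, (u : ℝ)⁻¹) / μ + μ ^ 2 * (Nat.log 2 n + 1)) := by gcongr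
        linarith

theorem large_part (n : ℕ) (E : Finset (ℕ × ℕ)) (h6 : C6Free E) (T : ℝ) (hT : 0 ≤ T)
    (hTn : T ^ 3 = (n : ℝ) ^ 2)
    (hE : ∀ e ∈ E, 1 ≤ e.1 ∧ e.1 * e.2 ≤ n ∧ e.1 ^ 3 ≤ n ∧ e.2.Prime) :
    (E.card : ℝ) ≤ Nat.primeCounting n + Nat.primeCounting (n / 2) + 2 * T := by
  classical
  have hU : ∀ e ∈ E, e.1 ∈ Finset.Icc 1 ⌊Real.sqrt T⌋₊ := by
    intro e he
    obtain ⟨h1, h2, h3, h4⟩ := hE e he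
    rw [Finset.mem_Icc]
    refine ⟨h1, Nat.le_floor (Real.le_sqrt_of_sq_le ?_)⟩
    have := cube_le_T (u := e.1 ^ 2) (n := n) hT hTn (by
      calc (e.1 ^ 2) ^ 3 = (e.1 ^ 3) ^ 2 := by ring
        _ ≤ n ^ 2 := Nat.pow_le_pow_left h3 2)
    exact_mod_cast this
  have hV : ∀ e ∈ E, e.2 ∈ Nat.primesBelow (n + 1) := by
    intro e he
    obtain ⟨h1, h2, h3, h4⟩ := hE e he
    rw [Nat.mem_primesBelow]
    exact ⟨by nlinarith, h4⟩
  have hg := gyori E h6 _ _ hU hV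
  have hs : ∑ y ∈ Nat.primesBelow (n + 1), min 2 (nbL E y).card ≤
      Nat.primeCounting n + Nat.primeCounting (n / 2) := by
    calc ∑ y ∈ Nat.primesBelow (n + 1), min 2 (nbL E y).card ≤
        ∑ y ∈ Nat.primesBelow (n + 1), (1 + if y ≤ n / 2 then 1 else 0) := by
          apply Finset.sum_le_sum
          intro y hy
          by_cases hyn : y ≤ n / 2
          · simp [hyn]
          · simp only [hyn, if_false]
            refine (min_le_right _ _).trans ?_
            rw [add_zero, Finset.card_le_one]
            have : ∀ a ∈ nbL E y, a = 1 := by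
              intro a ha
              rw [mem_nbL] at ha
              obtain ⟨h1, h2, h3, h4⟩ := hE _ ha
              simp only at h1 h2
              by_contra hne
              have : 2 * y ≤ a * y := Nat.mul_le_mul_right _ (by omega)
              omega
            intro a ha b hb
            rw [this a ha, this b hb]
      _ = Nat.primeCounting n + Nat.primeCounting (n / 2) := by
          rw [Finset.sum_add_distrib, ← Finset.card_filter]
          congr 1
          · simp [Nat.primeCounting, Nat.primesBelow_card_eq_primeCounting']
          · rw [Nat.primeCounting, ← Nat.primesBelow_card_eq_primeCounting']
            congr 1
            ext y
            simp only [Finset.mem_filter, Nat.mem_primesBelow]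
            constructor
            · rintro ⟨⟨a, b⟩, c⟩; exact ⟨by omega, b⟩
            · rintro ⟨a, b⟩; exact ⟨⟨by omega, b⟩, by omega⟩
  have hc : ((Finset.Icc 1 ⌊Real.sqrt T⌋₊).card : ℝ) ^ 2 ≤ T := by
    simp only [Nat.card_Icc, Nat.add_sub_cancel]
    have := Nat.floor_le (Real.sqrt_nonneg T)
    calc (⌊Real.sqrt T⌋₊ : ℝ) ^ 2 ≤ Real.sqrt T ^ 2 := by gcongr
      _ = T := Real.sq_sqrt hT
  have h' : E.card ≤ Nat.primeCounting n + Nat.primeCounting (n / 2) + 2 * (Finset.Icc 1 ⌊Real.sqrt T⌋₊).card ^ 2 := by omega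
  have h'' : (E.card : ℝ) ≤ Nat.primeCounting n + Nat.primeCounting (n / 2) + 2 * ((Finset.Icc 1 ⌊Real.sqrt T⌋₊).card : ℝ) ^ 2 := by exact_mod_cast h'
  linarith

theorem small_part (n : ℕ) (E : Finset (ℕ × ℕ)) (h6 : C6Free E) (T : ℝ) (hT : 0 ≤ T)
    (hTn : T ^ 3 = (n : ℝ) ^ 2)
    (hE : ∀ e ∈ E, 1 ≤ e.1 ∧ 1 ≤ e.2 ∧ e.1 ^ 3 ≤ n ∧ e.2 ^ 3 ≤ n ^ 2) :
    (E.card : ℝ) ≤ 4 * T := by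
  classical
  have hU : ∀ e ∈ E, e.1 ∈ Finset.Icc 1 ⌊Real.sqrt T⌋₊ := by
    intro e he
    obtain ⟨h1, h2, h3, h4⟩ := hE e he
    rw [Finset.mem_Icc]
    refine ⟨h1, Nat.le_floor (Real.le_sqrt_of_sq_le ?_)⟩
    have := cube_le_T (u := e.1 ^ 2) (n := n) hT hTn (by
      calc (e.1 ^ 2) ^ 3 = (e.1 ^ 3) ^ 2 := by ring
        _ ≤ n ^ 2 := Nat.pow_le_pow_left h3 2)
    exact_mod_cast this
  have hV : ∀ e ∈ E, e.2 ∈ Finset.Icc 1 ⌊T⌋₊ := by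
    intro e he
    obtain ⟨h1, h2, h3, h4⟩ := hE e he
    rw [Finset.mem_Icc]
    exact ⟨h2, Nat.le_floor (cube_le_T hT hTn h4)⟩
  have hg := gyori E h6 _ _ hU hV
  have hs : ∑ y ∈ Finset.Icc 1 ⌊T⌋₊, min 2 (nbL E y).card ≤ 2 * ⌊T⌋₊ := by
    calc ∑ y ∈ Finset.Icc 1 ⌊T⌋₊, min 2 (nbL E y).card ≤ ∑ y ∈ Finset.Icc 1 ⌊T⌋₊, 2 :=
          Finset.sum_le_sum (fun y _ => min_le_left _ _)
      _ = _ := by simp [mul_comm]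
  have hc : ((Finset.Icc 1 ⌊Real.sqrt T⌋₊).card : ℝ) ^ 2 ≤ T := by
    simp only [Nat.card_Icc, Nat.add_sub_cancel]
    have := Nat.floor_le (Real.sqrt_nonneg T)
    calc (⌊Real.sqrt T⌋₊ : ℝ) ^ 2 ≤ Real.sqrt T ^ 2 := by gcongr
      _ = T := Real.sq_sqrt hT
  have h' : E.card ≤ 2 * ⌊T⌋₊ + 2 * (Finset.Icc 1 ⌊Real.sqrt T⌋₊).card ^ 2 := by omega
  have h'' : (E.card : ℝ) ≤ 2 * (⌊T⌋₊ : ℝ) + 2 * ((Finset.Icc 1 ⌊Real.sqrt T⌋₊).card : ℝ) ^ 2 := by exact_mod_cast h'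
  have := Nat.floor_le hT
  linarith

theorem core (n : ℕ) (l T : ℝ) (hl : 1000 ≤ l) (hn : 1 ≤ n) (hln : Real.log n = l ^ 8) (hT : 0 ≤ T)
    (hTn : T ^ 3 = (n : ℝ) ^ 2) (A : Finset ℕ) (hA : A ⊆ Finset.Icc 1 n) (hA6 : NoSixSquareProduct A) :
    (A.card : ℝ) ≤ Nat.primeCounting n + Nat.primeCounting (n / 2) + T * l ^ 7 := by
  classical
  have hl0 : 0 < l := by linarith
  have hn0 : (0 : ℝ) < n := by exact_mod_cast hn
  set z := ⌊Real.exp (l ^ 3)⌋₊ with hz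
  have hzle : (z : ℝ) ≤ Real.exp (l ^ 3) := Nat.floor_le (Real.exp_pos _).le
  have hzlt : Real.exp (l ^ 3) < z + 1 := Nat.lt_floor_add_one _
  have hz1 : 1 ≤ z := Nat.le_floor (by simpa using Real.one_le_exp (by positivity))
  have hz0 : (0 : ℝ) < z := by exact_mod_cast hz1
  have hlogz : Real.log z ≤ l ^ 3 := by
    rw [Real.log_le_iff_le_exp hz0]; exact hzle
  have hlogz' : l ^ 3 ≤ Real.log (z + 1) := by
    rw [Real.le_log_iff_exp_le (by positivity)]; exact hzlt.le
  have hl5 : (1 : ℝ) ≤ l ^ 5 := one_le_pow₀ (by linarith)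
  have hl3 : (1 : ℝ) ≤ l ^ 3 := one_le_pow₀ (by linarith)
  have hl6 : (1 : ℝ) ≤ l ^ 6 := one_le_pow₀ (by linarith)
  have hl2 : (1000000 : ℝ) ≤ l ^ 2 := by nlinarith
  have hz3 : z ^ 3 ≤ n := by
    have : (z : ℝ) ^ 3 ≤ n := by
      calc (z : ℝ) ^ 3 ≤ Real.exp (l ^ 3) ^ 3 := by gcongr
        _ = Real.exp (3 * l ^ 3) := by rw [← Real.exp_nat_mul]; norm_num
        _ ≤ Real.exp (Real.log n) := by
            apply Real.exp_le_exp.2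
            rw [hln]
            have h5 : l ^ 2 ≤ l ^ 5 := pow_le_pow_right₀ (by linarith) (by norm_num)
            calc 3 * l ^ 3 ≤ l ^ 5 * l ^ 3 := by gcongr; linarith
              _ = l ^ 8 := by ring
        _ = n := Real.exp_log hn0
    exact_mod_cast this
  have hdec : ∀ a : ℕ, ∃ e : ℕ × ℕ, a ∈ A → e.1 * e.2 = a ∧ ((e.1 ^ 3 ≤ n ∧ e.2.Prime ∧ n ^ 2 < e.2 ^ 3) ∨ (e.1 ^ 3 ≤ n ∧ e.2 ^ 3 ≤ n ^ 2) ∨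
      (n < e.1 ^ 3 ∧ e.1 ^ 3 ≤ n ^ 2 ∧ Rough z e.1) ∨ (n < e.1 ^ 3 ∧ e.1 ^ 3 ≤ n ^ 2 ∧ Smooth z e.1)) := by
    intro a
    by_cases ha : a ∈ A
    · have := Finset.mem_Icc.1 (hA ha)
      obtain ⟨u, v, h⟩ := decomp n z a hn hz3 this.1 this.2
      exact ⟨(u, v), fun _ => h⟩
    · exact ⟨(0, 0), fun h => absurd h ha⟩
  choose g hg using hdec
  set E := A.image g with hEdef
  have hEmem : ∀ e ∈ E, e.1 * e.2 ∈ A ∧ g (e.1 * e.2) = e := by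
    intro e he
    obtain ⟨a, ha, rfl⟩ := Finset.mem_image.1 he
    rw [(hg a ha).1]; exact ⟨ha, rfl⟩
  have h6 : C6Free E := by
    apply c6free_of_noSix hA6
    · intro h; simpa using hA h
    · exact fun e he => (hEmem e he).1
    · intro e he f hf h
      rw [← (hEmem e he).2, ← (hEmem f hf).2, h]
  have hcard : A.card = E.card := by
    rw [hEdef, Finset.card_image_of_injOn]
    intro a ha b hb h
    rw [← (hg a ha).1, ← (hg b hb).1, h]
  have hEpos : ∀ e ∈ E, 1 ≤ e.1 ∧ 1 ≤ e.2 ∧ e.1 * e.2 ≤ n := by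
    intro e he
    have := Finset.mem_Icc.1 (hA (hEmem e he).1)
    refine ⟨Nat.pos_of_ne_zero ?_, Nat.pos_of_ne_zero ?_, this.2⟩ <;>
    · intro h; rw [h] at this; simp at this
  set E1 := E.filter (fun e => e.1 ^ 3 ≤ n ∧ e.2.Prime) with hE1
  set E2 := E.filter (fun e => e.1 ^ 3 ≤ n ∧ e.2 ^ 3 ≤ n ^ 2) with hE2
  set E3 := E.filter (fun e => n < e.1 ^ 3 ∧ e.1 ^ 3 ≤ n ^ 2 ∧ Rough z e.1) with hE3
  set E4 := E.filter (fun e => n < e.1 ^ 3 ∧ e.1 ^ 3 ≤ n ^ 2 ∧ Smooth z e.1) with hE4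
  have hsub : E ⊆ (E1 ∪ E2) ∪ (E3 ∪ E4) := by
    intro e he
    have h := (hg _ (hEmem e he).1).2
    rw [(hEmem e he).2] at h
    simp only [hE1, hE2, hE3, hE4, Finset.mem_union, Finset.mem_filter, he, true_and]
    tauto
  have hc : E.card ≤ (E1.card + E2.card) + (E3.card + E4.card) :=
    (Finset.card_le_card hsub).trans ((Finset.card_union_le _ _).trans
      (Nat.add_le_add (Finset.card_union_le _ _) (Finset.card_union_le _ _)))
  have hc' : (E.card : ℝ) ≤ (E1.card + E2.card) + (E3.card + E4.card) := by exact_mod_cast hc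
  have b1 := large_part n E1 (h6.mono (Finset.filter_subset _ _)) T hT hTn (by
    intro e he
    simp only [hE1, Finset.mem_filter] at he
    obtain ⟨p1, p2, p3⟩ := hEpos e he.1
    exact ⟨p1, p3, he.2⟩)
  have b2 := small_part n E2 (h6.mono (Finset.filter_subset _ _)) T hT hTn (by
    intro e he
    simp only [hE2, Finset.mem_filter] at he
    obtain ⟨p1, p2, p3⟩ := hEpos e he.1
    exact ⟨p1, p2, he.2⟩)
  have hlog2 : (Nat.log 2 n : ℝ) + 1 ≤ 3 * l ^ 8 := by
    have h1 : (2 : ℝ) ^ (Nat.log 2 n) ≤ n := by exact_mod_cast Nat.pow_log_le_self 2 (by omega)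
    have h2 := Real.log_le_log (by positivity) h1
    rw [Real.log_pow, hln] at h2
    have h3 := Real.log_two_gt_d9
    have h4 : (0 : ℝ) ≤ Nat.log 2 n := by positivity
    have h8 : (1 : ℝ) ≤ l ^ 8 := one_le_pow₀ (by linarith)
    nlinarith
  have dy : ∀ (F : Finset (ℕ × ℕ)), F ⊆ E → (∀ e ∈ F, n < e.1 ^ 3 ∧ e.1 ^ 3 ≤ n ^ 2) →
      ∑ u ∈ F.image Prod.fst, (u : ℝ)⁻¹ ≤ 3 * l ^ 5 → (F.card : ℝ) ≤ T * (304 * l ^ 6) := by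
    intro F hF hF3 hsum
    have := dyadic n hn F (h6.mono hF) T (1 / l) hT (by positivity) hTn (F.image Prod.fst)
      (fun e he => Finset.mem_image_of_mem _ he)
      (by
        intro u hu
        obtain ⟨e, he, rfl⟩ := Finset.mem_image.1 hu
        exact hF3 e he)
      (fun e he => (hEpos e (hF he)).2)
    refine this.trans ?_
    have e1 : 2 * (∑ u ∈ F.image Prod.fst, (u : ℝ)⁻¹) / (1 / l) ≤ 6 * l ^ 6 := by
      rw [div_div_eq_mul_div, div_one]
      calc 2 * (∑ u ∈ F.image Prod.fst, (u : ℝ)⁻¹) * l ≤ 2 * (3 * l ^ 5) * l := by gcongr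
        _ = 6 * l ^ 6 := by ring
    have e2 : (1 / l) ^ 2 * ((Nat.log 2 n : ℝ) + 1) ≤ 3 * l ^ 6 := by
      calc (1 / l) ^ 2 * ((Nat.log 2 n : ℝ) + 1) ≤ (1 / l) ^ 2 * (3 * l ^ 8) := by gcongr
        _ = 3 * l ^ 6 := by field_simp
    calc 160 * T + 16 * T * (2 * (∑ u ∈ F.image Prod.fst, (u : ℝ)⁻¹) / (1 / l) + (1 / l) ^ 2 * ((Nat.log 2 n : ℝ) + 1))
        ≤ 160 * T * l ^ 6 + 16 * T * (6 * l ^ 6 + 3 * l ^ 6) := by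
          have : 160 * T * 1 ≤ 160 * T * l ^ 6 := by gcongr
          have : 16 * T * (2 * (∑ u ∈ F.image Prod.fst, (u : ℝ)⁻¹) / (1 / l) + (1 / l) ^ 2 * ((Nat.log 2 n : ℝ) + 1)) ≤ 16 * T * (6 * l ^ 6 + 3 * l ^ 6) := by gcongr
          linarith
      _ = T * (304 * l ^ 6) := by ring
  have b3 : (E3.card : ℝ) ≤ T * (304 * l ^ 6) := by
    apply dy E3 (Finset.filter_subset _ _)
    · intro e he
      simp only [hE3, Finset.mem_filter] at he
      exact ⟨he.2.1, he.2.2.1⟩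
    · have hr := rough_sum n z (E3.image Prod.fst) (by
        intro u hu
        obtain ⟨e, he, rfl⟩ := Finset.mem_image.1 hu
        simp only [hE3, Finset.mem_filter] at he
        obtain ⟨p1, p2, p3⟩ := hEpos e he.1
        exact ⟨p1, by nlinarith, he.2.2.2⟩)
      have h1 := harm_upper (n * z)
      have h2 := harm_lower z
      push_cast at h1
      rw [Real.log_mul hn0.ne' hz0.ne', hln] at h1
      set X := ∑ u ∈ E3.image Prod.fst, (u : ℝ)⁻¹ with hX
      have hX0 : 0 ≤ X := Finset.sum_nonneg (fun u _ => by positivity)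
      have h3 : X * l ^ 3 ≤ 1 + (l ^ 8 + l ^ 3) := by
        have : X * l ^ 3 ≤ X * ∑ s ∈ Finset.Icc 1 z, (s : ℝ)⁻¹ := by
          gcongr; linarith
        linarith
      have h4 : 1 + (l ^ 8 + l ^ 3) ≤ 3 * l ^ 5 * l ^ 3 := by
        have h8 : (1 : ℝ) ≤ l ^ 8 := one_le_pow₀ (by linarith)
        have h38 : l ^ 3 ≤ l ^ 8 := pow_le_pow_right₀ (by linarith) (by norm_num)
        have : 3 * l ^ 5 * l ^ 3 = 3 * l ^ 8 := by ring
        linarith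
      exact le_of_mul_le_mul_right (h3.trans h4) (by positivity)
  have b4 : (E4.card : ℝ) ≤ T * (304 * l ^ 6) := by
    apply dy E4 (Finset.filter_subset _ _)
    · intro e he
      simp only [hE4, Finset.mem_filter] at he
      exact ⟨he.2.1, he.2.2.1⟩
    · have hr := smooth_sum n z (l ^ 3) hl3 hn hz1 hlogz (E4.image Prod.fst) (by
        intro u hu
        obtain ⟨e, he, rfl⟩ := Finset.mem_image.1 hu
        simp only [hE4, Finset.mem_filter] at he
        exact ⟨he.2.1, he.2.2.2⟩)
      refine hr.trans ?_
      have : Real.exp (6 + 6 * l ^ 3 - Real.log n / (9 * l ^ 3)) ≤ 1 := by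
        apply Real.exp_le_one_iff.2
        rw [hln]
        have : l ^ 8 / (9 * l ^ 3) = l ^ 2 * l ^ 3 / 9 := by field_simp
        rw [this]
        nlinarith
      linarith
  rw [hcard]
  have hfin : 6 * T + T * (304 * l ^ 6) + T * (304 * l ^ 6) ≤ T * l ^ 7 := by
    have e1 : 6 * T + T * (304 * l ^ 6) + T * (304 * l ^ 6) = T * (6 + 608 * l ^ 6) := by ring
    rw [e1]
    apply mul_le_mul_of_nonneg_left _ hT
    have : l ^ 7 = l * l ^ 6 := by ring
    nlinarith
  linarith

theorem noSixSquareProduct_card_upper_bound :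
    ∀ ε : ℝ, 0 < ε → ∃ N : ℕ, ∀ n : ℕ, N ≤ n → ∀ A : Finset ℕ, A ⊆ Finset.Icc 1 n →
      NoSixSquareProduct A →
      (A.card : ℝ) ≤ (Nat.primeCounting n : ℝ) + (Nat.primeCounting (n / 2) : ℝ) +
        (n : ℝ) ^ ((2 : ℝ) / 3) *
          Real.log n ^ ((2 : ℝ) ^ ((1 : ℝ) / 3) - 1 / 3 + ε) := by
  intro ε hε
  refine ⟨⌈Real.exp ((1000 : ℝ) ^ 8)⌉₊, fun n hn A hA hA6 => ?_⟩
  have hn1 : Real.exp ((1000 : ℝ) ^ 8) ≤ n := (Nat.le_ceil _).trans (by exact_mod_cast hn)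
  have hn0 : (0 : ℝ) < n := lt_of_lt_of_le (Real.exp_pos _) hn1
  have hn' : 1 ≤ n := by exact_mod_cast hn0
  have hlog : (1000 : ℝ) ^ 8 ≤ Real.log n := (Real.le_log_iff_exp_le hn0).2 hn1
  have hlog1 : 1 ≤ Real.log n := le_trans (by norm_num) hlog
  have hlog0 : 0 ≤ Real.log n := by linarith
  set l := Real.log n ^ ((1 : ℝ) / 8) with hl
  have hl8 : l ^ 8 = Real.log n := by
    rw [hl, ← Real.rpow_natCast, ← Real.rpow_mul hlog0]; norm_num
  have hl0 : 0 ≤ l := by positivity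
  have hl1000 : 1000 ≤ l := by
    apply le_of_pow_le_pow_left₀ (n := 8) (by norm_num) hl0
    rw [hl8]; exact hlog
  have hT3 : ((n : ℝ) ^ ((2 : ℝ) / 3)) ^ 3 = (n : ℝ) ^ 2 := by
    rw [← Real.rpow_natCast, ← Real.rpow_mul hn0.le]; norm_num
  have hcore := core n l ((n : ℝ) ^ ((2 : ℝ) / 3)) hl1000 hn' hl8.symm (by positivity) hT3 A hA hA6
  refine hcore.trans ?_
  gcongr
  have hl7 : l ^ 7 = Real.log n ^ ((7 : ℝ) / 8) := by
    rw [hl, ← Real.rpow_natCast, ← Real.rpow_mul hlog0]; norm_num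
  rw [hl7]
  apply Real.rpow_le_rpow_of_exponent_le hlog1
  have h2 : (29 / 24 : ℝ) ≤ (2 : ℝ) ^ ((1 : ℝ) / 3) := by
    apply le_of_pow_le_pow_left₀ (n := 3) (by norm_num) (by positivity)
    rw [← Real.rpow_natCast ((2 : ℝ) ^ ((1 : ℝ) / 3)), ← Real.rpow_mul (by norm_num)]
    norm_num
  linarith
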